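/- The polynomial p(X) = X⁵ + 1440 X⁴ + 782464 X³ + 200810496 X² + 24403705856 X + 1126904627200 is not solvable by radicals over ℚ: its Galois group over ℚ is not a solvable group, so no root of p in ℂ can be expressed in radicals. -/

import Mathlib

/-!
The Galois group of the quintic, acting on its five roots, is the full symmetric group `S₅`, which
is not solvable; a root expressible in radicals would force solvability, since the quintic is
irreducible.

Irreducibility holds because the reduction modulo `19` has no factor of degree one or two
(`irreducible_map_nineteen`), so `5` divides the order of the Galois group. All five roots are real,
so complex conjugation gives no information; a transposition is instead supplied by a Frobenius
element at `5` (`exists_gal_fixing_three_roots`): modulo `5` the quintic is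
`X (X - 2) (X - 4) (X² + X + 2)`, which is separable with exactly three roots in `𝔽₅`, so Frobenius
fixes three roots and swaps the other two. A subgroup of `S₅` of order divisible by `5` that
contains a transposition is everything.
-/

open Polynomial

/-- The quintic `X⁵ + 1440X⁴ + 782464X³ + 200810496X² + 24403705856X
+ 1126904627200` over `ℚ`. -/
noncomputable def pQuintic : ℚ[X] :=
  X ^ 5 + 1440 * X ^ 4 + 782464 * X ^ 3 + 200810496 * X ^ 2
    + 24403705856 * X + 1126904627200

/-- The integral model of `pQuintic`, used for reduction modulo primes. -/
noncomputable def pInt : ℤ[X] :=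
  X ^ 5 + 1440 * X ^ 4 + 782464 * X ^ 3 + 200810496 * X ^ 2
    + 24403705856 * X + 1126904627200

lemma pInt_natDegree : pInt.natDegree = 5 := by
  unfold pInt
  compute_degree!

lemma pInt_monic : pInt.Monic := by
  unfold pInt
  monicity!

lemma pInt_map : pInt.map (Int.castRingHom ℚ) = pQuintic := by
  simp [pInt, pQuintic]

lemma pInt_coeffs : pInt.coeff 0 = 1126904627200 ∧ pInt.coeff 1 = 24403705856 ∧
    pInt.coeff 2 = 200810496 ∧ pInt.coeff 3 = 782464 ∧ pInt.coeff 4 = 1440 := by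
  have h : pInt = X ^ 5 + C 1440 * X ^ 4 + C 782464 * X ^ 3 + C 200810496 * X ^ 2
    + C 24403705856 * X + C 1126904627200 := by simp [pInt]
  rw [h]
  simp [coeff_X]

/-- No monic quadratic `X² + aX + b` divides `pInt` modulo `19`: comparing coefficients of
`X⁴`, `X³`, `X²` determines the cofactor `X³ + cX² + dX + e`, and the two remaining
equations have no solution. -/
lemma no_quadratic_factor_mod_nineteen : ∀ a b : ZMod 19,
    let c := 1440 - a
    let d := 782464 - b - a * c
    let e := 200810496 - a * d - b * c
    ¬ (a * e + b * d = 24403705856 ∧ b * e = 1126904627200) := by decide +kernel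

lemma no_root_mod_nineteen : ∀ a : ZMod 19, a ^ 5 + 1440 * a ^ 4 + 782464 * a ^ 3 + 200810496 * a ^ 2
    + 24403705856 * a + 1126904627200 ≠ 0 := by decide +kernel

lemma irreducible_map_nineteen : Irreducible (pInt.map (Int.castRingHom (ZMod 19))) := by
  have : Fact (Nat.Prime 19) := ⟨by norm_num⟩
  have hm := pInt_monic.map (Int.castRingHom (ZMod 19))
  have hd : (pInt.map (Int.castRingHom (ZMod 19))).natDegree = 5 := by
    rw [pInt_monic.natDegree_map, pInt_natDegree]
  rw [hm.irreducible_iff_natDegree']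
  refine ⟨fun h => by rw [h] at hd; simp at hd, fun f g hf hg hfg hmem => ?_⟩
  rw [hd] at hmem
  simp only [Finset.mem_Ioc] at hmem
  have hsum : f.natDegree + g.natDegree = 5 := by rw [← hf.natDegree_mul hg, hfg, hd]
  have hco : ∀ n, (f * g).coeff n = ((pInt.coeff n : ℤ) : ZMod 19) := fun n => by
    rw [hfg, coeff_map]; rfl
  obtain ⟨h0, h1, h2, h3, h4⟩ := pInt_coeffs
  obtain h | h : g.natDegree = 1 ∨ g.natDegree = 2 := by lia
  · have hg' : g = X + C (g.coeff 0) := hg.eq_X_add_C h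
    have hr : (pInt.map (Int.castRingHom (ZMod 19))).eval (-g.coeff 0) = 0 := by
      rw [← hfg, hg']; simp
    apply no_root_mod_nineteen (-g.coeff 0)
    simpa [pInt] using hr
  · have hf3 : f.natDegree = 3 := by lia
    have fl : f.coeff 3 = 1 := by rw [← hf3]; exact hf
    have gl : g.coeff 2 = 1 := by rw [← h]; exact hg
    have fz : ∀ n, 3 < n → f.coeff n = 0 := fun n hn => coeff_eq_zero_of_natDegree_lt (by lia)
    have gz : ∀ n, 2 < n → g.coeff n = 0 := fun n hn => coeff_eq_zero_of_natDegree_lt (by lia)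
    have e0 := hco 0
    have e1 := hco 1
    have e2 := hco 2
    have e3 := hco 3
    have e4 := hco 4
    simp only [coeff_mul, Finset.Nat.antidiagonal_succ, Finset.Nat.antidiagonal_zero,
      Finset.sum_cons, Finset.map_singleton, Finset.sum_singleton, Finset.map_cons,
      Function.Embedding.prodMap, Function.Embedding.coeFn_mk, Prod.map,
      Function.Embedding.refl_apply, Nat.succ_eq_add_one, zero_add, Nat.reduceAdd,
      h0, h1, h2, h3, h4, fl, gl, fz 4 (by lia), gz 3 (by lia), gz 4 (by lia)] at e0 e1 e2 e3 e4
    push_cast at e0 e1 e2 e3 e4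
    have hc : f.coeff 2 = 1440 - g.coeff 1 := by linear_combination e4
    have hdd : f.coeff 1 = 782464 - g.coeff 0 - g.coeff 1 * f.coeff 2 := by linear_combination e3
    have he : f.coeff 0 = 200810496 - g.coeff 1 * f.coeff 1 - g.coeff 0 * f.coeff 2 := by
      linear_combination e2
    apply no_quadratic_factor_mod_nineteen (g.coeff 1) (g.coeff 0)
    rw [← hc, ← hdd, ← he]
    constructor
    · linear_combination e1
    · linear_combination e0

lemma pQuintic_irreducible : Irreducible pQuintic := by
  have : Fact (Nat.Prime 19) := ⟨by norm_num⟩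
  rw [← pInt_map]
  exact (pInt_monic.irreducible_iff_irreducible_map_fraction_map (K := ℚ)).1
    (pInt_monic.irreducible_of_irreducible_map _ _ irreducible_map_nineteen)

lemma separable_map_five : (pInt.map (Int.castRingHom (ZMod 5))).Separable := by
  have h5 : (5 : (ZMod 5)[X]) = 0 := by
    have : ((5 : ℕ) : (ZMod 5)[X]) = 0 := CharP.cast_eq_zero _ 5
    exact_mod_cast this
  have h : pInt.map (Int.castRingHom (ZMod 5)) = X ^ 5 + 4 * X ^ 3 + X ^ 2 + X := by
    simp [pInt]
    linear_combination (288 * X ^ 4 + 156492 * X ^ 3 + 40162099 * X ^ 2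
      + 4880741171 * X + 225380925440) * h5
  rw [h]
  -- Bézout coefficients produced by the Euclidean algorithm over `𝔽₅`
  refine ⟨2 * X + 1, 2 + (3 * X + 4) * (3 * X ^ 3 + 2 * X ^ 2 + X + 1), ?_⟩
  simp only [derivative_add, derivative_mul, derivative_X_pow, derivative_X, derivative_ofNat,
    Nat.cast_ofNat, map_ofNat]
  ring_nf
  reduce_mod_char


open NumberField

/-- The roots of `pQuintic` in `K` lift to the ring of integers, and there `pInt` is the product of
the corresponding linear factors. -/
lemma prod_roots {K : Type*} [Field K] [NumberField K]
    (hs : (pQuintic.map (algebraMap ℚ K)).Splits) :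
    ∃ r : pQuintic.rootSet K → 𝓞 K, (∀ x, (r x : K) = x) ∧
      pInt.map (algebraMap ℤ (𝓞 K)) = ∏ x, (X - C (r x)) := by
  classical
  have hmap : pInt.map (algebraMap ℤ K) = pQuintic.map (algebraMap ℚ K) := by
    rw [← pInt_map, Polynomial.map_map]
    congr 1
    exact RingHom.ext_int _ _
  have hxint : ∀ x : pQuintic.rootSet K, IsIntegral ℤ (x : K) := fun x => by
    refine ⟨pInt, pInt_monic, ?_⟩
    have hx := aeval_eq_zero_of_mem_rootSet x.2
    rwa [aeval_def, ← eval_map, ← hmap, eval_map] at hx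
  choose r hr using fun x => IsIntegralClosure.isIntegral_iff (A := 𝓞 K).1 (hxint x)
  refine ⟨r, hr, ?_⟩
  apply map_injective (algebraMap (𝓞 K) K) RingOfIntegers.coe_injective
  rw [Polynomial.map_map, ← IsScalarTower.algebraMap_eq ℤ (𝓞 K) K, hmap, Polynomial.map_prod]
  simp only [Polynomial.map_sub, map_X, map_C, hr]
  have hm : (pQuintic.map (algebraMap ℚ K)).Monic := hmap ▸ pInt_monic.map _
  have hnd := nodup_roots (pQuintic_irreducible.separable.map (f := algebraMap ℚ K))
  have hprod : ((pQuintic.map (algebraMap ℚ K)).roots.map fun a => X - C a).prod =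
      ∏ a ∈ (pQuintic.map (algebraMap ℚ K)).roots.toFinset, (X - C a) := by
    rw [Finset.prod_eq_multiset_prod, Multiset.toFinset_val, hnd.dedup]
  conv_lhs => rw [hs.eq_prod_roots_of_monic hm]
  rw [hprod]
  exact Finset.prod_subtype (F := inferInstance) _
    (fun x => by simp [rootSet_def, aroots_def]) (fun a : K => X - C a)

universe u

/-- Existence of Frobenius elements: a Galois number field has an automorphism acting as
`x ↦ x ^ p` on the residue field of some prime of its ring of integers above `p`. -/
lemma exists_frobenius (K : Type u) [Field K] [NumberField K] [IsGalois ℚ K] (p : ℕ)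
    (hp : p.Prime) :
    ∃ (F : Type u) (_ : Field F) (π : 𝓞 K →+* F) (σ : Gal(K/ℚ)),
      CharP F p ∧ ∀ x, π (σ • x) = π x ^ p := by
  have hp' : Prime (p : ℤ) := Nat.prime_iff_prime_int.1 hp
  have hmax : (Ideal.span {(p : ℤ)}).IsMaximal :=
    PrincipalIdealRing.isMaximal_of_irreducible hp'.irreducible
  obtain ⟨Q, hQ, hQp⟩ :=
    Ideal.exists_maximal_ideal_liesOver_of_isIntegral (S := 𝓞 K) (Ideal.span {(p : ℤ)})
  have hQ0 : Q ≠ ⊥ :=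
    Ideal.ne_bot_of_liesOver_of_ne_bot (p := Ideal.span {(p : ℤ)}) (by simpa using hp.ne_zero) Q
  have : Finite (𝓞 K ⧸ Q) := Ideal.finiteQuotientOfFreeOfNeBot Q hQ0
  have : Algebra.IsInvariant ℤ (𝓞 K) Gal(K/ℚ) :=
    (inferInstance : IsGaloisGroup Gal(K/ℚ) ℤ (𝓞 K)).isInvariant
  obtain ⟨σ, hσ⟩ := IsArithFrobAt.exists_of_isInvariant ℤ Gal(K/ℚ) Q
  have hcard : Nat.card (ℤ ⧸ Q.under ℤ) = p := by
    rw [← Int.card_ideal_quot p, hQp.over]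
  refine ⟨𝓞 K ⧸ Q, Ideal.Quotient.field Q, Ideal.Quotient.mk Q, σ, ?_, fun x => ?_⟩
  · refine (CharP.charP_iff_prime_eq_zero hp).2 ?_
    have hmem : algebraMap ℤ (𝓞 K) p ∈ Q := by
      rw [← Ideal.mem_comap, ← Ideal.under_def, ← hQp.over]
      exact Ideal.mem_span_singleton_self _
    have hzero := Ideal.Quotient.eq_zero_iff_mem.2 hmem
    simpa using hzero
  · have hx := hσ.mk_apply x
    rwa [hcard] at hx

/-- A Frobenius element at `5` fixes exactly three of the five roots. The roots stay distinct
modulo a prime above `5`, so a root is fixed exactly when its reduction lies in `𝔽₅`, and modulo `5`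
the quintic is `X (X - 2) (X - 4) (X² + X + 2)` with the last factor irreducible. -/
lemma exists_gal_fixing_three_roots {K : Type*} [Field K] [NumberField K] [IsGalois ℚ K] [DecidableEq K]
    (hs : (pQuintic.map (algebraMap ℚ K)).Splits) :
    ∃ σ : Gal(K/ℚ), (Finset.univ.filter fun x : pQuintic.rootSet K => σ x = x).card = 3 := by
  classical
  obtain ⟨r, hr, hprod⟩ := prod_roots hs
  obtain ⟨F, _, π, σ, hchar, hfrob⟩ := exists_frobenius K 5 (by norm_num)
  have hF5 : (5 : F) = 0 := by exact_mod_cast CharP.cast_eq_zero F 5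
  have hF : pInt.map (Int.castRingHom F) = ∏ x, (X - C (π (r x))) := by
    have := congrArg (Polynomial.map π) hprod
    rw [Polynomial.map_map, Polynomial.map_prod] at this
    simpa only [RingHom.ext_int (π.comp (algebraMap ℤ (𝓞 K))) (Int.castRingHom _),
      Polynomial.map_sub, map_X, map_C] using this
  have hsep : (pInt.map (Int.castRingHom F)).Separable := by
    have := separable_map_five.map (f := ZMod.castHom dvd_rfl F)
    rwa [Polynomial.map_map, RingHom.ext_int (RingHom.comp _ _) (Int.castRingHom F)] at this
  have hinj : Function.Injective fun x => π (r x) := by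
    rwa [hF, separable_prod_X_sub_C_iff] at hsep
  have heval : ∀ t : F, (∃ x, π (r x) = t) ↔ t ^ 5 + 4 * t ^ 3 + t ^ 2 + t = 0 := by
    intro t
    have h1 : (pInt.map (Int.castRingHom F)).eval t
        = t ^ 5 + 4 * t ^ 3 + t ^ 2 + t := by
      simp [pInt]
      linear_combination (288 * t ^ 4 + 156492 * t ^ 3 + 40162099 * t ^ 2
        + 4880741171 * t + 225380925440) * hF5
    rw [← h1, hF, eval_prod, Finset.prod_eq_zero_iff]
    simp only [Finset.mem_univ, true_and, eval_sub, eval_X, eval_C, sub_eq_zero, eq_comm (a := t)]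
  have hfix : ∀ x : pQuintic.rootSet K, σ x = x ↔ π (r x) ^ 5 = π (r x) := by
    intro x
    have hmem : σ x ∈ pQuintic.rootSet K := by
      have := aeval_eq_zero_of_mem_rootSet x.2
      rw [mem_rootSet]
      refine ⟨pQuintic_irreducible.ne_zero, ?_⟩
      rw [aeval_algHom_apply, this, map_zero]
    have hsr : r ⟨σ x, hmem⟩ = σ • r x := by
      apply RingOfIntegers.ext
      rw [hr]
      change σ x = σ (r x : K)
      rw [hr]
    rw [← hfrob, ← hsr, hinj.eq_iff, Subtype.ext_iff]
  refine ⟨σ, ?_⟩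
  -- it remains to see that the reductions lying in `𝔽₅` are exactly `0`, `2`, `4`
  have h3 : ({0, 2, 4} : Finset F).card = 3 := by
    have h2 : (2 : F) ≠ 0 := fun h => one_ne_zero (α := F) (by
      linear_combination hF5 - 2 * h)
    have h4 : (4 : F) ≠ 0 := fun h => one_ne_zero (α := F) (by
      linear_combination hF5 - h)
    have h24 : (2 : F) ≠ 4 := fun h => h2 (by linear_combination - h)
    rw [Finset.card_eq_three]
    exact ⟨0, 2, 4, h2.symm, h4.symm, h24, rfl⟩
  rw [← h3, ← Finset.card_image_of_injective _ hinj]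
  congr 1
  ext t
  simp only [Finset.mem_image, Finset.mem_filter, Finset.mem_univ, true_and, hfix,
    Finset.mem_insert, Finset.mem_singleton]
  constructor
  · rintro ⟨x, hx, rfl⟩
    have h := (heval _).1 ⟨x, rfl⟩
    -- substituting `t ^ 5 = t` into the reduced quintic leaves `-t (t - 2) (t - 4)` modulo `5`
    have h' : π (r x) * ((π (r x) - 2) * (π (r x) - 4)) = 0 := by
      linear_combination hx - h + (π (r x) ^ 3 - π (r x) ^ 2 + 2 * π (r x)) * hF5
    simpa [sub_eq_zero] using h'
  · intro ht
    obtain ⟨x, hx⟩ := (heval t).2 (by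
      rcases ht with rfl | rfl | rfl
      · simp
      · linear_combination 14 * hF5
      · linear_combination 260 * hF5)
    refine ⟨x, ?_, hx⟩
    rw [hx]
    rcases ht with rfl | rfl | rfl
    · simp
    · linear_combination 6 * hF5
    · linear_combination 204 * hF5

lemma pQuintic_natDegree : pQuintic.natDegree = 5 := by
  rw [← pInt_map, pInt_monic.natDegree_map, pInt_natDegree]

/-- The statement does not depend on the splitting field `K`; an abstract `K` makes it possible to
identify its `ℚ`-algebra structure with the canonical one. -/
lemma not_isSolvable_gal_aux (K : Type*) [Field K] [inst : Algebra ℚ K]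
    [IsSplittingField ℚ K pQuintic] : ¬ Group.IsSolvable pQuintic.Gal := by
  classical
  have : CharZero K := charZero_of_injective_algebraMap (algebraMap ℚ K).injective
  obtain rfl : inst = DivisionRing.toRatAlgebra := Subsingleton.elim _ _
  have hs : (pQuintic.map (algebraMap ℚ K)).Splits := IsSplittingField.splits K pQuintic
  have : Fact (pQuintic.map (algebraMap ℚ K)).Splits := ⟨hs⟩
  have : FiniteDimensional ℚ K := IsSplittingField.finiteDimensional K pQuintic
  have : NumberField K := ⟨⟩
  have : IsGalois ℚ K :=
    IsGalois.of_separable_splitting_field (p := pQuintic) pQuintic_irreducible.separable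
  have hc : Fintype.card (pQuintic.rootSet K) = 5 := by
    rw [card_rootSet_eq_natDegree pQuintic_irreducible.separable hs, pQuintic_natDegree]
  obtain ⟨σ, hσ⟩ := exists_gal_fixing_three_roots hs
  let τ := Gal.galActionHom pQuintic K (Gal.restrict pQuintic K σ)
  have hτ : τ.IsSwap := by
    rw [← Equiv.Perm.card_support_eq_two]
    have hsupp : τ.support = (Finset.univ.filter fun x : pQuintic.rootSet K => σ x = x)ᶜ := by
      ext x
      simp only [Equiv.Perm.mem_support, Finset.mem_compl, Finset.mem_filter, Finset.mem_univ,
        true_and, ne_eq, Subtype.ext_iff, τ, Gal.galActionHom_restrict]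
    rw [hsupp, Finset.card_compl, hσ, hc]
  have htop : (Gal.galActionHom pQuintic K).range = ⊤ := by
    apply Equiv.Perm.subgroup_eq_top_of_swap_mem (τ := τ)
    · rw [hc]; norm_num
    · rw [hc, Fintype.card_eq_nat_card,
        Nat.card_congr (MonoidHom.ofInjective (Gal.galActionHom_injective pQuintic K)).toEquiv.symm,
        ← pQuintic_natDegree]
      exact Gal.prime_degree_dvd_card pQuintic_irreducible (by rw [pQuintic_natDegree]; norm_num)
    · exact ⟨_, rfl⟩
    · exact hτ
  intro h
  refine Equiv.Perm.not_isSolvable (pQuintic.rootSet K) ?_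
    (Group.isSolvable_of_surjective (MonoidHom.range_eq_top.1 htop))
  rw [Cardinal.mk_fintype, hc]
  norm_num

lemma not_isSolvable_gal : ¬ Group.IsSolvable pQuintic.Gal :=
  @not_isSolvable_gal_aux pQuintic.SplittingField _ _ (IsSplittingField.splittingField pQuintic)

/-- `pQuintic` is not solvable by radicals over `ℚ`: its Galois
group over `ℚ` is not solvable, and no complex root of it lies in the field of
elements of `ℂ` expressible in radicals over `ℚ`. -/
theorem stmt5 :
    ¬ IsSolvable pQuintic.Gal ∧
    ∀ x : ℂ, aeval x pQuintic = 0 → x ∉ solvableByRad ℚ ℂ := by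
  exact ⟨not_isSolvable_gal,
    fun _ hx h => not_isSolvable_gal (isSolvable_gal_of_irreducible h pQuintic_irreducible hx)⟩
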